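/- arXiv:1508.07499 — 3 statements merged into one kernel-verified Lean document; each statement's English description precedes it below -/
import Mathlib

section
/- Let ℓ be a prime and let a_1,...,a_m, b_1,...,b_n be nonzero elements of the algebraic closure 𝔽̄_ℓ of 𝔽_ℓ. Suppose max{m,n} < ℓ and that for every integer k with 1 ≤ k ≤ max{m,n} one has a_1^k + ⋯ + a_m^k = b_1^k + ⋯ + b_n^k. Then the multisets {a_1,...,a_m} and {b_1,...,b_n} coincide (in particular m = n). -/
open MvPolynomial Finset in
/-- Newton's identities, evaluated at a finite family of elements of a commutative ring. -/
theorem Multiset.mul_esymm_map_univ_eq_sum {R σ : Type*} [CommRing R] [Fintype σ]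
    (f : σ → R) (k : ℕ) :
    k * (univ.val.map f).esymm k = (-1) ^ (k + 1) *
      ∑ p ∈ Finset.HasAntidiagonal.antidiagonal k with p.1 < k,
        (-1) ^ p.1 * (univ.val.map f).esymm p.1 * ∑ i, f i ^ p.2 := by
  have h := congrArg (aeval f) (mul_esymm_eq_sum σ R k)
  simpa [← aeval_esymm_eq_multiset_esymm σ R, psum] using h

/-- Over a domain in which `1, …, N` are nonzero, the first `N` power sums determine the first `N`
elementary symmetric functions, even for families of different sizes. -/
theorem Multiset.esymm_map_univ_eq_of_sum_pow_eq {R σ τ : Type*} [CommRing R] [IsDomain R]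
    [Fintype σ] [Fintype τ] (f : σ → R) (g : τ → R) {N : ℕ}
    (hN : ∀ k : ℕ, 1 ≤ k → k ≤ N → (k : R) ≠ 0)
    (hsum : ∀ k : ℕ, 1 ≤ k → k ≤ N → ∑ i, f i ^ k = ∑ j, g j ^ k) {k : ℕ} (hk : k ≤ N) :
    (Finset.univ.val.map f).esymm k = (Finset.univ.val.map g).esymm k := by
  induction k using Nat.strong_induction_on with
  | _ k ih =>
    rcases Nat.eq_zero_or_pos k with rfl | hpos
    · simp [Multiset.esymm]
    · apply mul_left_cancel₀ (hN k hpos hk)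
      rw [mul_esymm_map_univ_eq_sum, mul_esymm_map_univ_eq_sum]
      congr 1
      refine Finset.sum_congr rfl fun p hp => ?_
      simp only [Finset.mem_filter, Finset.HasAntidiagonal.mem_antidiagonal] at hp
      rw [ih p.1 hp.2 (by lia), hsum p.2 (by lia) (by lia)]

/-- The top elementary symmetric function of a multiset is its product. -/
theorem Multiset.esymm_card {R : Type*} [CommSemiring R] (s : Multiset R) :
    s.esymm s.card = s.prod := by
  simp [Multiset.esymm, Multiset.powersetCard_self]

/-- If `t` has no zero element and `s` has the same elementary symmetric function as `t` in degree
`t.card`, then `t` has at most as many elements as `s`. -/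
theorem Multiset.card_le_of_esymm_eq {R : Type*} [CommRing R] [IsDomain R] {s t : Multiset R}
    (ht : (0 : R) ∉ t) (h : s.esymm t.card = t.esymm t.card) : t.card ≤ s.card := by
  by_contra! hlt
  rw [esymm_card, Multiset.esymm, powersetCard_eq_empty _ hlt] at h
  exact ht (prod_eq_zero_iff.mp (by simpa using h.symm))

/-- Two multisets of the same cardinality in a domain agree as soon as their elementary symmetric
functions do. -/
theorem Multiset.eq_of_esymm_eq {R : Type*} [CommRing R] [IsDomain R] {s t : Multiset R}
    (hcard : s.card = t.card) (h : ∀ k ≤ s.card, s.esymm k = t.esymm k) : s = t := by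
  rw [← Polynomial.roots_multiset_prod_X_sub_C s, ← Polynomial.roots_multiset_prod_X_sub_C t,
    prod_X_sub_X_eq_sum_esymm, prod_X_sub_X_eq_sum_esymm, ← hcard]
  congr 1
  refine Finset.sum_congr rfl fun k hk => ?_
  rw [h k (by simpa [Nat.lt_succ_iff] using hk)]

/-- Lemma 2.3: if `a₁,...,aₘ, b₁,...,bₙ` are nonzero elements of `𝔽̄_ℓ` with
`max m n < ℓ` and the power sums agree for `1 ≤ k ≤ max m n`, then the multisets
`{a₁,...,aₘ}` and `{b₁,...,bₙ}` coincide. -/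
theorem stmt_2 (ℓ : ℕ) [Fact ℓ.Prime] (m n : ℕ)
    (a : Fin m → AlgebraicClosure (ZMod ℓ)) (b : Fin n → AlgebraicClosure (ZMod ℓ))
    (ha : ∀ i, a i ≠ 0) (hb : ∀ j, b j ≠ 0)
    (hmn : max m n < ℓ)
    (hsum : ∀ k : ℕ, 1 ≤ k → k ≤ max m n →
      ∑ i, (a i) ^ k = ∑ j, (b j) ^ k) :
    Multiset.map a Finset.univ.val = Multiset.map b Finset.univ.val := by
  have hcast : ∀ k : ℕ, 1 ≤ k → k ≤ max m n → (k : AlgebraicClosure (ZMod ℓ)) ≠ 0 := by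
    intro k hk hkN h0
    have : CharP (AlgebraicClosure (ZMod ℓ)) ℓ :=
      charP_of_injective_algebraMap (algebraMap (ZMod ℓ) _).injective ℓ
    have := Nat.le_of_dvd hk ((CharP.cast_eq_zero_iff _ ℓ k).mp h0)
    lia
  have hesymm {k : ℕ} (hk : k ≤ max m n) :=
    Multiset.esymm_map_univ_eq_of_sum_pow_eq a b hcast hsum hk
  have hnm := Multiset.card_le_of_esymm_eq (s := Finset.univ.val.map a)
    (t := Finset.univ.val.map b) (by simpa using hb) (hesymm (by simp))
  have hmn' := Multiset.card_le_of_esymm_eq (s := Finset.univ.val.map b)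
    (t := Finset.univ.val.map a) (by simpa using ha) (hesymm (by simp)).symm
  exact Multiset.eq_of_esymm_eq (le_antisymm hmn' hnm) fun k hk =>
    hesymm (le_max_of_le_left (by simpa using hk))
end

section
/- Let F be a field, G a finite group, H a normal subgroup of G such that the index [G:H] is nonzero as an element of F, and V a finite-dimensional F-linear representation of G. Then V is a semisimple representation of G if and only if its restriction to H is a semisimple representation of H. -/
namespace Subrepresentation

variable {F G V : Type*} [Field F] [Group G] [AddCommGroup V] [Module F V]
  {ρ : Representation F G V}

theorem isCompl_iff_toSubmodule {σ τ : Subrepresentation ρ} :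
    IsCompl σ τ ↔ IsCompl σ.toSubmodule τ.toSubmodule := by
  have hle : ∀ a b : Subrepresentation ρ, a ≤ b ↔ a.toSubmodule ≤ b.toSubmodule :=
    fun _ _ => Iff.rfl
  rw [isCompl_iff, isCompl_iff, disjoint_iff_inf_le, disjoint_iff_inf_le, codisjoint_iff_le_sup,
    codisjoint_iff_le_sup, hle, hle]
  rfl

/-- A subrepresentation of `ρ`, viewed as a subrepresentation of the restriction to `H`. -/
def restrict (H : Subgroup G) (σ : Subrepresentation ρ) :
    Subrepresentation (ρ.comp H.subtype : Representation F H V) where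
  toSubmodule := σ.toSubmodule
  apply_mem_toSubmodule h _ hv := σ.apply_mem_toSubmodule (h : G) hv

/-- The translate by `g : G` of an `H`-stable subspace, for `H` normal in `G`. -/
def translate {H : Subgroup G} [H.Normal] (g : G)
    (σ : Subrepresentation (ρ.comp H.subtype : Representation F H V)) :
    Subrepresentation (ρ.comp H.subtype : Representation F H V) where
  toSubmodule := σ.toSubmodule.map (ρ g)
  apply_mem_toSubmodule h := by
    rintro _ ⟨v, hv, rfl⟩
    have hconj : g⁻¹ * h * g ∈ H := by
      simpa using Subgroup.Normal.conj_mem inferInstance (h : G) h.2 g⁻¹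
    refine ⟨ρ (g⁻¹ * h * g) v, σ.apply_mem_toSubmodule ⟨_, hconj⟩ hv, ?_⟩
    change ρ g (ρ (g⁻¹ * h * g) v) = ρ (h : G) (ρ g v)
    rw [← Module.End.mul_apply, ← Module.End.mul_apply, ← map_mul, ← map_mul]
    congr 2
    group

theorem translate_mul {H : Subgroup G} [H.Normal] (g g' : G)
    (σ : Subrepresentation (ρ.comp H.subtype : Representation F H V)) :
    translate (g * g') σ = translate g (translate g' σ) := by
  apply toSubmodule_injective
  change σ.toSubmodule.map (ρ (g * g')) = (σ.toSubmodule.map (ρ g')).map (ρ g)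
  rw [map_mul, ← Submodule.map_comp]
  rfl

theorem translate_one {H : Subgroup G} [H.Normal]
    (σ : Subrepresentation (ρ.comp H.subtype : Representation F H V)) :
    translate 1 σ = σ := by
  apply toSubmodule_injective
  change σ.toSubmodule.map (ρ 1) = σ.toSubmodule
  rw [map_one]
  exact Submodule.map_id _

theorem translate_mono {H : Subgroup G} [H.Normal] (g : G) :
    Monotone (translate g :
      Subrepresentation (ρ.comp H.subtype : Representation F H V) → _) :=
  fun σ τ h => Submodule.map_mono (f := ρ g) (show σ.toSubmodule ≤ τ.toSubmodule from h)

/-- Translation by `g : G` as an automorphism of the lattice of `H`-stable subspaces. -/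
def translateOrderIso (H : Subgroup G) [H.Normal] (g : G) :
    Subrepresentation (ρ.comp H.subtype : Representation F H V) ≃o
      Subrepresentation (ρ.comp H.subtype : Representation F H V) :=
  OrderIso.ofHomInv ⟨translate g, translate_mono g⟩ ⟨translate g⁻¹, translate_mono g⁻¹⟩
    (by apply OrderHom.ext
        funext σ
        change translate g (translate g⁻¹ σ) = σ
        rw [← translate_mul, mul_inv_cancel, translate_one])
    (by apply OrderHom.ext
        funext σ
        change translate g⁻¹ (translate g σ) = σ
        rw [← translate_mul, inv_mul_cancel, translate_one])

end Subrepresentation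

namespace Representation

variable {F G V : Type*} [Field F] [Group G] [AddCommGroup V] [Module F V]
  {ρ : Representation F G V}

open Subrepresentation

/-- Averaging an `H`-equivariant projection over `G ⧸ H` gives a `G`-equivariant one. -/
theorem isSemisimpleRepresentation_of_restrict (H : Subgroup G) [H.FiniteIndex]
    (hind : (H.index : F) ≠ 0)
    (hH : IsSemisimpleRepresentation (ρ.comp H.subtype : Representation F H V)) :
    IsSemisimpleRepresentation ρ := by
  refine ⟨fun σ => ?_⟩
  obtain ⟨τ, hτ⟩ := exists_isCompl (σ.restrict H)
  replace hτ : IsCompl σ.toSubmodule τ.toSubmodule := isCompl_iff_toSubmodule.1 hτ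
  let π : V →ₗ[F] V := Submodule.projection _ _ hτ
  have hπ_mem (v : V) : π v ∈ σ.toSubmodule := Submodule.projection_apply_mem hτ v
  have hπ_id {v : V} (hv : v ∈ σ.toSubmodule) : π v = v :=
    Submodule.projection_apply_of_mem_left hτ hv
  have hπ_comm (h : G) (hh : h ∈ H) (v : V) : π (ρ h v) = ρ h (π v) := by
    have hmem : v - π v ∈ τ.toSubmodule := Submodule.sub_projection_mem hτ v
    have hzero : π (ρ h (v - π v)) = 0 :=
      (Submodule.projection_apply_eq_zero_iff hτ).2 (τ.apply_mem_toSubmodule ⟨h, hh⟩ hmem)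
    rw [map_sub, map_sub, sub_eq_zero] at hzero
    rw [hzero, hπ_id (σ.apply_mem_toSubmodule h (hπ_mem v))]
  let C : G ⧸ H → V →ₗ[F] V := Quotient.lift (fun g => ρ g ∘ₗ π ∘ₗ ρ g⁻¹) (by
    intro a b hab
    have hab' : a⁻¹ * b ∈ H := QuotientGroup.leftRel_apply.1 hab
    ext v
    have h₁ := hπ_comm _ hab' (ρ b⁻¹ v)
    have h₂ : ρ (a⁻¹ * b) (ρ b⁻¹ v) = ρ a⁻¹ v := by
      rw [← Module.End.mul_apply, ← map_mul]; simp
    rw [h₂] at h₁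
    change ρ a (π (ρ a⁻¹ v)) = ρ b (π (ρ b⁻¹ v))
    rw [h₁, ← Module.End.mul_apply, ← map_mul]
    simp)
  have hC_mk (g : G) (v : V) : C (g : G ⧸ H) v = ρ g (π (ρ g⁻¹ v)) := rfl
  have hC_mem (q : G ⧸ H) (v : V) : C q v ∈ σ.toSubmodule := by
    induction q using QuotientGroup.induction_on with
    | H g => exact σ.apply_mem_toSubmodule g (hπ_mem _)
  have hC_id (q : G ⧸ H) {v : V} (hv : v ∈ σ.toSubmodule) : C q v = v := by
    induction q using QuotientGroup.induction_on with
    | H g => rw [hC_mk, hπ_id (σ.apply_mem_toSubmodule _ hv), ρ.self_inv_apply]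
  have hC_smul (g : G) (q : G ⧸ H) (v : V) : C (g • q) (ρ g v) = ρ g (C q v) := by
    induction q using QuotientGroup.induction_on with
    | H a =>
      change ρ (g * a) (π (ρ (g * a)⁻¹ (ρ g v))) = ρ g (ρ a (π (ρ a⁻¹ v)))
      have h : ρ (g * a)⁻¹ (ρ g v) = ρ a⁻¹ v := by
        rw [← Module.End.mul_apply, ← map_mul]; simp
      rw [h, map_mul]
      rfl
  have := Fintype.ofFinite (G ⧸ H)
  let P : V →ₗ[F] V := ∑ q, C q
  have hP (v : V) : P v = ∑ q, C q v := LinearMap.sum_apply _ _ _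
  have hP_mem (v : V) : P v ∈ σ.toSubmodule := by
    rw [hP]
    exact Submodule.sum_mem _ fun q _ => hC_mem q v
  have hP_id {v : V} (hv : v ∈ σ.toSubmodule) : P v = (H.index : F) • v := by
    rw [hP, Finset.sum_congr rfl fun q _ => hC_id q hv, Finset.sum_const, Finset.card_univ,
      Nat.cast_smul_eq_nsmul, Subgroup.index, Nat.card_eq_fintype_card]
  have hP_comm (g : G) (v : V) : P (ρ g v) = ρ g (P v) := by
    rw [hP, hP, map_sum, ← Equiv.sum_comp (MulAction.toPerm g)]
    exact Finset.sum_congr rfl fun q _ => hC_smul g q v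
  refine ⟨⟨LinearMap.ker P, fun g v hv => ?_⟩, ?_⟩
  · rw [LinearMap.mem_ker] at hv ⊢
    rw [hP_comm, hv, map_zero]
  · rw [isCompl_iff_toSubmodule]
    have hcompl := LinearMap.isCompl_of_proj
      (f := (H.index : F)⁻¹ • P.codRestrict σ.toSubmodule hP_mem) fun v => Subtype.ext <| by
        change (H.index : F)⁻¹ • P v = v
        rw [hP_id v.2, inv_smul_smul₀ hind]
    rwa [LinearMap.ker_smul _ _ (inv_ne_zero hind), LinearMap.ker_codRestrict] at hcompl

/-- The `H`-socle is `G`-stable, and a `G`-stable complement of it contains no simple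
`H`-subrepresentation, hence vanishes. -/
theorem IsSemisimpleRepresentation.restrict [FiniteDimensional F V] (H : Subgroup G) [H.Normal]
    (hG : IsSemisimpleRepresentation ρ) :
    IsSemisimpleRepresentation (ρ.comp H.subtype : Representation F H V) := by
  let ρH : Representation F H V := ρ.comp H.subtype
  let e := subrepresentationSubmoduleOrderIso (ρ := ρH)
  have : IsArtinian (MonoidAlgebra F H) ρH.asModule :=
    isArtinian_of_tower F inferInstance
  let S : Submodule (MonoidAlgebra F H) ρH.asModule := sSup {a | IsAtom a}
  have hS (g : G) : translate g (e.symm S) ≤ e.symm S := by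
    let φ := (e.symm.trans (translateOrderIso H g)).trans e
    have hφ : φ S ≤ S := by
      rw [φ.map_sSup]
      exact iSup₂_le fun a ha => le_sSup ((φ.isAtom_iff a).2 ha)
    exact (e.le_symm_apply).2 hφ
  let σ : Subrepresentation ρ :=
    ⟨(e.symm S).toSubmodule, fun g v hv => hS g ⟨v, hv, rfl⟩⟩
  obtain ⟨τ, hτ⟩ := exists_isCompl σ
  have hST : IsCompl S (e (τ.restrict H)) := by
    have hστ : IsCompl σ.toSubmodule τ.toSubmodule := isCompl_iff_toSubmodule.1 hτ
    have h : IsCompl (e.symm S) (τ.restrict H) := isCompl_iff_toSubmodule.2 hστ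
    simpa using e.isCompl h
  rw [isSemisimpleRepresentation_iff_isSemisimpleModule_asModule, isSemisimpleModule_iff]
  apply complementedLattice_of_sSup_atoms_eq_top
  rcases eq_bot_or_exists_atom_le (e (τ.restrict H)) with hbot | ⟨a, ha, haT⟩
  · rw [hbot] at hST
    exact eq_top_of_isCompl_bot hST
  · exact absurd (le_bot_iff.1 (hST.disjoint (le_sSup ha) haT)) ha.1

end Representation

/-- [HL15b, Lemma 3.6]: let `F` be a field, `G` a finite group, `H ⊴ G` with
`[G:H]` nonzero in `F`, and `V` a finite-dimensional `F`-representation of `G`.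
Then `V` is semisimple over `G` iff its restriction to `H` is semisimple. -/
theorem stmt_5 (F : Type*) [Field F] (G : Type*) [Group G] [Finite G]
    (H : Subgroup G) [H.Normal] (hind : (H.index : F) ≠ 0)
    (V : Type*) [AddCommGroup V] [Module F V] [FiniteDimensional F V]
    (ρ : Representation F G V) :
    IsSemisimpleModule (MonoidAlgebra F G) ρ.asModule ↔
      IsSemisimpleModule (MonoidAlgebra F H)
        (Representation.asModule (ρ.comp H.subtype : Representation F H V)) := by
  rw [← Representation.isSemisimpleRepresentation_iff_isSemisimpleModule_asModule,
    ← Representation.isSemisimpleRepresentation_iff_isSemisimpleModule_asModule]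
  exact ⟨fun h => h.restrict H, Representation.isSemisimpleRepresentation_of_restrict H hind⟩
end

section
/- Let p be a prime, n a positive integer, and Γ a subgroup of GL_n(ℤ_p), where ℤ_p is the ring of p-adic integers. Let Γ act on ℚ_p^n via the inclusion GL_n(ℤ_p) ⊆ GL_n(ℚ_p), and on 𝔽_p^n via the entrywise reduction homomorphism GL_n(ℤ_p) → GL_n(𝔽_p). Then dim_{𝔽_p} (𝔽_p^n)^Γ ≥ dim_{ℚ_p} (ℚ_p^n)^Γ, where (·)^Γ denotes the subspace of vectors fixed by every element of Γ. -/
/-- A subspace `W` of `ℚ_p^n` is spanned by finitely many vectors of the lattice `ℤ_p^n` whose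
reductions modulo `p` are linearly independent: take a basis of the saturated sublattice
`W ∩ ℤ_p^n`. -/
theorem exists_span_eq_linearIndependent_toZMod (p : ℕ) [Fact p.Prime] {ι : Type*} [Finite ι]
    (W : Submodule ℚ_[p] (ι → ℚ_[p])) :
    ∃ (d : ℕ) (b : Fin d → ι → ℤ_[p]),
      Submodule.span ℚ_[p] (Set.range fun i j ↦ (b i j : ℚ_[p])) = W ∧
      LinearIndependent (ZMod p) fun i j ↦ PadicInt.toZMod (b i j) := by
  let φ : (ι → ℤ_[p]) →ₗ[ℤ_[p]] (ι → ℚ_[p]) := (Algebra.linearMap ℤ_[p] ℚ_[p]).compLeft ι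
  let M : Submodule ℤ_[p] (ι → ℤ_[p]) := (W.restrictScalars ℤ_[p]).comap φ
  let b := Module.finBasis ℤ_[p] M
  have hM (v : ι → ℤ_[p]) : v ∈ M ↔ (fun j ↦ (v j : ℚ_[p])) ∈ W := Iff.rfl
  refine ⟨_, fun i ↦ (b i : ι → ℤ_[p]), le_antisymm ?_ fun w hw ↦ ?_, ?_⟩
  · rw [Submodule.span_le]
    rintro _ ⟨i, rfl⟩
    exact (hM _).1 (b i).2
  · obtain ⟨a, ha⟩ := IsLocalization.exist_integer_multiples_of_finite
      (nonZeroDivisors ℤ_[p]) w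
    choose v hv using ha
    have ha0 : ((a : ℤ_[p]) : ℚ_[p]) ≠ 0 := by simp
    have hv' : (fun j ↦ (v j : ℚ_[p])) = ((a : ℤ_[p]) : ℚ_[p]) • w := by
      ext j
      exact (hv j).trans (Algebra.smul_def _ _)
    have hvM : v ∈ M := by
      rw [hM, hv']
      exact W.smul_mem _ hw
    rw [← Submodule.smul_mem_iff _ ha0, ← hv']
    have hsum := congrArg (fun x : M ↦ φ x) (b.sum_repr ⟨v, hvM⟩)
    simp only [Submodule.coe_sum, Submodule.coe_smul, map_sum, map_smul] at hsum
    change _ = (fun j ↦ (v j : ℚ_[p])) at hsum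
    rw [← hsum]
    refine Submodule.sum_mem _ fun i _ ↦ ?_
    rw [← algebraMap_smul ℚ_[p]]
    exact Submodule.smul_mem _ _ (Submodule.subset_span ⟨i, rfl⟩)
  · have hker (x : ℤ_[p]) : PadicInt.toZMod x = 0 ↔ (p : ℤ_[p]) ∣ x := by
      rw [← RingHom.mem_ker, PadicInt.ker_toZMod, PadicInt.maximalIdeal_eq_span_p,
        Ideal.mem_span_singleton]
    have hpQ : (p : ℚ_[p]) ≠ 0 := by exact_mod_cast (Fact.out : p.Prime).ne_zero
    rw [Fintype.linearIndependent_iff]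
    intro g hg
    choose c hc using fun i ↦ ZMod.ringHom_surjective (PadicInt.toZMod (p := p)) (g i)
    have hdvd (j : ι) : (p : ℤ_[p]) ∣ ((∑ i, c i • b i : M) : ι → ℤ_[p]) j := by
      rw [← hker]
      simpa [hc] using congrFun hg j
    choose w hw using hdvd
    have hwM : w ∈ M := by
      rw [hM, ← Submodule.smul_mem_iff _ hpQ]
      convert (hM _).1 (∑ i, c i • b i : M).2 using 1
      ext j
      rw [hw j]
      simp
    have hsum : ∑ i, c i • b i = (p : ℤ_[p]) • (⟨w, hwM⟩ : M) := by
      ext j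
      rw [hw j]
      simp
    intro i
    rw [← hc i, hker]
    refine ⟨b.repr ⟨w, hwM⟩ i, ?_⟩
    rw [← b.repr_sum_self c, hsum, map_smul, Finsupp.smul_apply, smul_eq_mul]

/-- Inequality (2.1) of the paper: for a subgroup `Γ ⊆ GL_n(ℤ_p)`, the dimension of
the fixed space of `Γ` on `𝔽_p^n` (via reduction mod `p`) is at least the dimension
of the fixed space of `Γ` on `ℚ_p^n` (via the inclusion `ℤ_p ⊆ ℚ_p`). -/
theorem stmt_9 (p : ℕ) [Fact p.Prime] (n : ℕ) (hn : 0 < n)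
    (Γ : Subgroup (GL (Fin n) ℤ_[p])) :
    Module.finrank ℚ_[p]
      ↥(⨅ γ : Γ, LinearMap.ker
          ((Matrix.GeneralLinearGroup.map (PadicInt.Coe.ringHom (p := p))
              (γ : GL (Fin n) ℤ_[p]) : Matrix (Fin n) (Fin n) ℚ_[p]).mulVecLin
            - LinearMap.id)) ≤
    Module.finrank (ZMod p)
      ↥(⨅ γ : Γ, LinearMap.ker
          ((Matrix.GeneralLinearGroup.map (PadicInt.toZMod (p := p))
              (γ : GL (Fin n) ℤ_[p]) : Matrix (Fin n) (Fin n) (ZMod p)).mulVecLin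
            - LinearMap.id)) := by
  obtain ⟨d, b, hspan, hli⟩ := exists_span_eq_linearIndependent_toZMod p
    (⨅ γ : Γ, LinearMap.ker
      ((Matrix.GeneralLinearGroup.map (PadicInt.Coe.ringHom (p := p))
          (γ : GL (Fin n) ℤ_[p]) : Matrix (Fin n) (Fin n) ℚ_[p]).mulVecLin
        - LinearMap.id))
  have hfix (i : Fin d) (γ : Γ) :
      ((γ : GL (Fin n) ℤ_[p]) : Matrix (Fin n) (Fin n) ℤ_[p]).mulVec (b i) = b i := by
    have hmem := hspan.le (Submodule.subset_span ⟨i, rfl⟩)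
    rw [Submodule.mem_iInf] at hmem
    have hγ := hmem γ
    rw [LinearMap.mem_ker, LinearMap.sub_apply, sub_eq_zero] at hγ
    refine funext fun j ↦ PadicInt.ext ?_
    exact (RingHom.map_mulVec (PadicInt.Coe.ringHom (p := p)) _ (b i) j).trans (congrFun hγ j)
  calc
    _ ≤ d := by
      rw [← hspan]
      exact (finrank_range_le_card _).trans_eq (Fintype.card_fin d)
    _ = Module.finrank (ZMod p) (Submodule.span (ZMod p)
        (Set.range fun i j ↦ PadicInt.toZMod (b i j))) := by
      rw [finrank_span_eq_card hli, Fintype.card_fin]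
    _ ≤ _ := by
      refine Submodule.finrank_mono ?_
      rw [Submodule.span_le]
      rintro _ ⟨i, rfl⟩
      rw [SetLike.mem_coe, Submodule.mem_iInf]
      intro γ
      rw [LinearMap.mem_ker, LinearMap.sub_apply, sub_eq_zero]
      ext j
      exact (RingHom.map_mulVec (PadicInt.toZMod (p := p)) _ (b i) j).symm.trans
        (congrArg _ (congrFun (hfix i γ) j))
end
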